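/- Suppose A and ε are conditionally independent given (η, U), and f : 𝓐 × ℝ × 𝓤 → ℝ is a nonnegative measurable conditional density of A given (η, U) with respect to μ_A, that is, for every bounded measurable φ : 𝓐 × ℝ × 𝓤 → ℝ one has E[φ(A, η, U)] = E[∫_𝓐 φ(a, η, U) f(a, η, U) dμ_A(a)]. Assume the common-support condition: f(A, η, U) > 0 almost surely, and f(a, η(ω), U(ω)) > 0 for μ_A ⊗ ℙ-almost every (a, ω) with π(a) ≠ 0. Assume Y·π(A)/f(A,η,U) is integrable and (a,ω) ↦ g(a, U(ω), ε(ω))π(a) is μ_A ⊗ ℙ-integrable. Then the inverse-probability-weighting identity holds: E[Y · π(A)/f(A, η, U)] = J := E[∫_𝓐 g(a, U, ε) π(a) dμ_A(a)]. -/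

import Mathlib

open MeasureTheory ProbabilityTheory

theorem icc_aux_condDens
    {Ω 𝓐 𝓗 : Type*} [MeasurableSpace Ω] [MeasurableSpace 𝓐] [MeasurableSpace 𝓗]
    (P : Measure Ω) [IsProbabilityMeasure P] (μA : Measure 𝓐) [SigmaFinite μA]
    (A : Ω → 𝓐) (H : Ω → 𝓗) (hA : Measurable A) (hH : Measurable H)
    (f : 𝓐 × 𝓗 → ℝ) (hf : Measurable f)
    (hd : ∀ φ : 𝓐 × 𝓗 → ℝ, Measurable φ → (∃ C, ∀ x, |φ x| ≤ C) →
      ∫ ω, φ (A ω, H ω) ∂P = ∫ ω, (∫ a, φ (a, H ω) * f (a, H ω) ∂μA) ∂P)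
    (B : Set 𝓐) (hB : MeasurableSet B)
    (hint : Integrable (fun ω => ∫ a in B, f (a, H ω) ∂μA) P) :
    (fun ω => ∫ a in B, f (a, H ω) ∂μA) =ᵐ[P]
      P⟦A ⁻¹' B | MeasurableSpace.comap H inferInstance⟧ := by
  have hm := hH.comap_le
  refine ae_eq_condExp_of_forall_setIntegral_eq hm ?_ (fun s _ _ => hint.integrableOn) ?_ ?_
  · exact (integrable_const (1:ℝ)).indicator (hA hB)
  · rintro s ⟨C, hC, rfl⟩ _
    have := hd ((B ×ˢ C).indicator 1) (measurable_one.indicator (hB.prod hC))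
      ⟨1, fun x => by by_cases h : x ∈ B ×ˢ C <;> simp [h]⟩
    rw [← integral_indicator (hH hC), ← integral_indicator (hH hC)]
    refine Eq.trans ?_ (this.symm.trans ?_)
    · refine integral_congr_ae (ae_of_all _ fun ω => ?_)
      by_cases h : H ω ∈ C
      · simp only [Set.indicator, Set.mem_preimage, h, if_true, Set.mem_prod, and_true]
        rw [← integral_indicator hB]
        refine integral_congr_ae (ae_of_all _ fun a => ?_)
        by_cases h' : a ∈ B <;> simp [h, h']
      · simp [Set.indicator, h]
    · refine integral_congr_ae (ae_of_all _ fun ω => ?_)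
      by_cases h : H ω ∈ C <;> by_cases h' : A ω ∈ B <;> simp [Set.indicator, h, h']
  · refine StronglyMeasurable.aestronglyMeasurable ?_
    exact (hf.stronglyMeasurable.integral_prod_left' (μ := μA.restrict B)).comp_measurable
      (comap_measurable H)

theorem icc_aux_law
    {Ω 𝓐 𝓗 𝓔 : Type*} [MeasurableSpace Ω] [StandardBorelSpace Ω]
    [MeasurableSpace 𝓐] [MeasurableSpace 𝓗] [MeasurableSpace 𝓔]
    (P : Measure Ω) [IsProbabilityMeasure P] (μA : Measure 𝓐) [SigmaFinite μA]
    (A : Ω → 𝓐) (H : Ω → 𝓗) (ε : Ω → 𝓔)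
    (hA : Measurable A) (hH : Measurable H) (hε : Measurable ε)
    (hindep : CondIndepFun (MeasurableSpace.comap H inferInstance) hH.comap_le A ε P)
    (f : 𝓐 × 𝓗 → ℝ) (hf : Measurable f) (hf0 : ∀ x, 0 ≤ f x)
    (hd : ∀ φ : 𝓐 × 𝓗 → ℝ, Measurable φ → (∃ C, ∀ x, |φ x| ≤ C) →
      ∫ ω, φ (A ω, H ω) ∂P = ∫ ω, (∫ a, φ (a, H ω) * f (a, H ω) ∂μA) ∂P) :
    P.map (fun ω => (A ω, H ω, ε ω)) =
      ((μA.prod P).withDensity (fun p => ENNReal.ofReal (f (p.1, H p.2)))).map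
        (fun p => (p.1, H p.2, ε p.2)) := by
  have hm := hH.comap_le
  have hintU : Integrable (fun ω => ∫ a in Set.univ, f (a, H ω) ∂μA) P := by
    by_contra h
    have := hd (fun _ => 1) measurable_const ⟨1, by simp⟩
    simp only [one_mul, integral_const, Measure.real, measure_univ] at this
    simp only [Measure.restrict_univ] at h
    rw [integral_undef h] at this
    simp at this
  have hone := icc_aux_condDens P μA A H hA hH f hf hd Set.univ MeasurableSet.univ hintU
  have hone' : ∀ᵐ ω ∂P, ∫ a, f (a, H ω) ∂μA = 1 := by
    filter_upwards [hone] with ω hω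
    simpa [condExp_const hm] using hω
  have hfint : ∀ᵐ ω ∂P, Integrable (fun a => f (a, H ω)) μA := by
    filter_upwards [hone'] with ω hω
    by_contra h
    rw [integral_undef h] at hω
    simp at hω
  have : IsFiniteMeasure (P.map (fun ω => (A ω, H ω, ε ω))) := inferInstance
  refine Measure.ext_prod₃ fun {B C D} hB hC hD => ?_
  set k : Ω → ℝ := fun ω => ∫ a in B, f (a, H ω) ∂μA with hk
  have hkm : StronglyMeasurable[MeasurableSpace.comap H inferInstance] k :=
    (hf.stronglyMeasurable.integral_prod_left' (μ := μA.restrict B)).comp_measurable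
      (comap_measurable H)
  have hk0 : ∀ ω, 0 ≤ k ω := fun ω => integral_nonneg fun a => hf0 _
  have hkint : Integrable k P := by
    refine Integrable.mono' (integrable_const (1:ℝ)) (hkm.mono hm).aestronglyMeasurable ?_
    filter_upwards [hone', hfint] with ω h1 h2
    rw [Real.norm_of_nonneg (hk0 ω), ← h1]
    exact setIntegral_le_integral h2 (ae_of_all _ fun a => hf0 _)
  have hkc := icc_aux_condDens P μA A H hA hH f hf hd B hB hkint
  have hi := (condIndepFun_iff_condExp_inter_preimage_eq_mul hA hε).1 hindep B D hB hD
  set e : Ω → ℝ := (ε ⁻¹' D).indicator (fun _ => (1:ℝ)) with he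
  have heint : Integrable e P := (integrable_const (1:ℝ)).indicator (hε hD)
  have hkeeq : k * e = (ε ⁻¹' D).indicator k := by
    ext ω; by_cases h : ω ∈ ε ⁻¹' D <;> simp [he, h]
  have hke : Integrable (k * e) P := by
    rw [hkeeq]; exact hkint.indicator (hε hD)
  have hpull := condExp_mul_of_stronglyMeasurable_left hkm hke heint
  have hCm : MeasurableSet[MeasurableSpace.comap H inferInstance] (H ⁻¹' C) := ⟨C, hC, rfl⟩
  have hAD : MeasurableSet (A ⁻¹' B ∩ ε ⁻¹' D) := (hA hB).inter (hε hD)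
  have key : P.real (H ⁻¹' C ∩ (A ⁻¹' B ∩ ε ⁻¹' D)) = ∫ ω in H ⁻¹' C, (k * e) ω ∂P := by
    rw [← setIntegral_condExp hm hke hCm]
    have : (P[k * e | MeasurableSpace.comap H inferInstance]) =ᵐ[P]
        P⟦A ⁻¹' B ∩ ε ⁻¹' D | MeasurableSpace.comap H inferInstance⟧ := by
      filter_upwards [hpull, hi, hkc] with ω h1 h2 h3
      rw [h1, h2, Pi.mul_apply, ← h3]
    rw [integral_congr_ae (ae_restrict_of_ae this),
      setIntegral_condExp hm ((integrable_const (1:ℝ)).indicator hAD) hCm,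
      setIntegral_indicator hAD]
    simp
  have hmeas3 : Measurable (fun p : 𝓐 × Ω => (p.1, H p.2, ε p.2)) := by fun_prop
  have hBCD : MeasurableSet (B ×ˢ C ×ˢ D) := hB.prod (hC.prod hD)
  have hfm : Measurable (fun p : 𝓐 × Ω => ENNReal.ofReal (f (p.1, H p.2))) := by fun_prop
  rw [Measure.map_apply (by fun_prop) hBCD, Measure.map_apply hmeas3 hBCD,
    withDensity_apply _ (hmeas3 hBCD), ← lintegral_indicator (hmeas3 hBCD),
    lintegral_prod_symm _ (hfm.indicator (hmeas3 hBCD)).aemeasurable]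
  have hset : (fun ω => (A ω, H ω, ε ω)) ⁻¹' (B ×ˢ C ×ˢ D) =
      H ⁻¹' C ∩ (A ⁻¹' B ∩ ε ⁻¹' D) := by
    ext ω; simp; tauto
  rw [hset, ← ENNReal.ofReal_toReal (measure_ne_top P _)]
  change ENNReal.ofReal (P.real _) = _
  rw [key, ← integral_indicator (hH hC), ofReal_integral_eq_lintegral_ofReal
    (hke.indicator (hH hC))]
  · refine lintegral_congr_ae ?_
    filter_upwards [hfint] with ω hω
    by_cases h : H ω ∈ C
    · by_cases h' : ε ω ∈ D
      · have e1 : (H ⁻¹' C).indicator (k * e) ω = k ω := by simp [he, h, h']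
        rw [e1, hk]
        simp only
        rw [ofReal_integral_eq_lintegral_ofReal hω.integrableOn (ae_of_all _ fun a => hf0 _),
          ← lintegral_indicator hB]
        refine lintegral_congr fun a => ?_
        by_cases h'' : a ∈ B <;> simp [Set.indicator, h, h', h'']
      · simp [he, Set.indicator, h, h']
    · simp [Set.indicator, h]
  · refine ae_of_all _ fun ω => Set.indicator_nonneg (fun ω _ => ?_) ω
    exact mul_nonneg (hk0 ω) (Set.indicator_nonneg (fun _ _ => zero_le_one) ω)

/-- **Lemma 5, IPW part (ICC paper).** With observed confounders `(η, U)`,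
if `A ⫫ ε | (η, U)`, `f` is a conditional density of `A` given `(η, U)` w.r.t.
`μ_A` with the common-support property, then the inverse-probability-weighting
identity `E[Y π(A) / f(A, η, U)] = J := E[∫ g(a, U, ε) π(a) dμ_A(a)]` holds. -/
theorem icc_lemma5_ipw_observed_confounders
    {Ω 𝓐 𝓤 𝓔 : Type*}
    [MeasurableSpace Ω] [StandardBorelSpace Ω] [Nonempty Ω]
    [MeasurableSpace 𝓐] [StandardBorelSpace 𝓐]
    [MeasurableSpace 𝓤] [StandardBorelSpace 𝓤]
    [MeasurableSpace 𝓔] [StandardBorelSpace 𝓔]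
    (P : Measure Ω) [IsProbabilityMeasure P]
    (μA : Measure 𝓐) [SigmaFinite μA]
    (A : Ω → 𝓐) (U : Ω → 𝓤) (ε : Ω → 𝓔) (η : Ω → ℝ)
    (hA : Measurable A) (hU : Measurable U) (hε : Measurable ε) (hη : Measurable η)
    (g : 𝓐 × 𝓤 × 𝓔 → ℝ) (π : 𝓐 → ℝ) (hg : Measurable g) (hπ : Measurable π)
    -- A ⫫ ε | (η, U)
    (hindep : CondIndepFun
      (MeasurableSpace.comap (fun ω => (η ω, U ω)) inferInstance)
      (Measurable.comap_le (by fun_prop)) A ε P)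
    (f : 𝓐 × ℝ × 𝓤 → ℝ) (hf : Measurable f) (hf_nonneg : ∀ x, 0 ≤ f x)
    -- f is a conditional density of A given (η, U) w.r.t. μ_A
    (hf_density : ∀ φ : 𝓐 × ℝ × 𝓤 → ℝ, Measurable φ → (∃ C, ∀ x, |φ x| ≤ C) →
      ∫ ω, φ (A ω, η ω, U ω) ∂P
        = ∫ ω, (∫ a, φ (a, η ω, U ω) * f (a, η ω, U ω) ∂μA) ∂P)
    -- common support: f(A, η, U) > 0 a.s.
    (hf_pos : ∀ᵐ ω ∂P, 0 < f (A ω, η ω, U ω))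
    -- and f(a, η(ω), U(ω)) > 0 for μ_A ⊗ ℙ-a.e. (a, ω) with π(a) ≠ 0
    (hf_pos' : ∀ᵐ p ∂(μA.prod P), π p.1 ≠ 0 → 0 < f (p.1, η p.2, U p.2))
    -- integrability of the IPW integrand Y π(A) / f(A, η, U)
    (hIPWInt : Integrable
      (fun ω => g (A ω, U ω, ε ω) * π (A ω) / f (A ω, η ω, U ω)) P)
    -- integrability of (a, ω) ↦ g(a, U(ω), ε(ω)) π(a) w.r.t. μ_A ⊗ ℙ
    (hJInt : Integrable (fun p : 𝓐 × Ω => g (p.1, U p.2, ε p.2) * π p.1) (μA.prod P)) :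
    ∫ ω, g (A ω, U ω, ε ω) * π (A ω) / f (A ω, η ω, U ω) ∂P
      = ∫ ω, (∫ a, g (a, U ω, ε ω) * π a ∂μA) ∂P := by
  have hH : Measurable (fun ω => (η ω, U ω)) := by fun_prop
  have hlaw := icc_aux_law P μA A (fun ω => (η ω, U ω)) ε hA hH hε hindep f hf hf_nonneg hf_density
  set F : 𝓐 × (ℝ × 𝓤) × 𝓔 → ℝ := fun x => g (x.1, x.2.1.2, x.2.2) * π x.1 / f (x.1, x.2.1) with hF
  have hFm : Measurable F := by fun_prop
  have h1 : ∫ ω, g (A ω, U ω, ε ω) * π (A ω) / f (A ω, η ω, U ω) ∂P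
      = ∫ x, F x ∂(P.map (fun ω => (A ω, (η ω, U ω), ε ω))) := by
    rw [integral_map (by fun_prop) hFm.aestronglyMeasurable]
  rw [h1, hlaw, integral_map (by fun_prop) hFm.aestronglyMeasurable,
    integral_withDensity_eq_integral_toReal_smul (by fun_prop) (by simp),
    ← integral_prod_symm _ hJInt]
  refine integral_congr_ae ?_
  filter_upwards [hf_pos'] with p hp
  simp only [hF, smul_eq_mul, ENNReal.toReal_ofReal (hf_nonneg _)]
  by_cases h : π p.1 = 0
  · simp [h]
  · have := (hp h).ne'
    field_simp
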